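/- Let r ≥ 3 and let n_1,…,n_r ≥ 1 be integers, and let U_{n_1,…,n_r} be the associated quandle. Then: (i) the commutator subgroup of the structure group of U_{n_1,…,n_r} is isomorphic to ℤ/gcd(n_1,…,n_r,2); (ii) if r = 3, then H_2(U_{n_1,n_2,n_3}) ≅ ℤ⁹ × (ℤ/gcd(n_1,n_2,n_3,2))³; (iii) if r ≥ 4, then H_2(U_{n_1,…,n_r}) ≅ ℤ^{r²}, i.e. the second rack homology group has no torsion. -/

import Mathlib

variable {X : Type*}

/-- The relators `g_a g_b (g_b g_{a ◁ b})⁻¹` of the structure group. -/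
def structureRels (op : X → X → X) : Set (FreeGroup X) :=
  {w | ∃ a b : X,
    w = FreeGroup.of a * FreeGroup.of b * (FreeGroup.of b * FreeGroup.of (op a b))⁻¹}

/-- The structure group `⟨g_a, a ∈ X | g_a g_b = g_b g_{a ◁ b}⟩` of a quandle. -/
abbrev StructureGroup (op : X → X → X) : Type _ := PresentedGroup (structureRels op)

/-- The second rack differential `d₂(a,b) = (a◁b) - (a)`. -/
def d2 (op : X → X → X) : FreeAbelianGroup (X × X) →+ FreeAbelianGroup X :=
  FreeAbelianGroup.lift fun p =>
    FreeAbelianGroup.of (op p.1 p.2) - FreeAbelianGroup.of p.1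

/-- The third rack differential
`d₃(a,b,c) = (a◁b,c) - (a,c) - (a◁c, b◁c) + (a,b)`. -/
def d3 (op : X → X → X) : FreeAbelianGroup (X × X × X) →+ FreeAbelianGroup (X × X) :=
  FreeAbelianGroup.lift fun t =>
    FreeAbelianGroup.of (op t.1 t.2.1, t.2.2) - FreeAbelianGroup.of (t.1, t.2.2)
      - FreeAbelianGroup.of (op t.1 t.2.2, op t.2.1 t.2.2)
      + FreeAbelianGroup.of (t.1, t.2.1)

/-- The second rack homology group `H₂ = ker d₂ / im d₃`. -/
abbrev H2 (op : X → X → X) : Type _ :=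
  ↥((d2 op).ker) ⧸ ((d3 op).range.addSubgroupOf (d2 op).ker)

/-- The quandle `U_{n_1,…,n_r}` on `ℤ/n_1 ⊔ ⋯ ⊔ ℤ/n_r`: `a ◁ b = a` if `a, b` lie in
the same summand and `a ◁ b = a + 1` otherwise. -/
def Uop {r : ℕ} (n : Fin r → ℕ) :
    (Σ i, ZMod (n i)) → (Σ i, ZMod (n i)) → (Σ i, ZMod (n i)) :=
  fun a b => if a.1 = b.1 then a else ⟨a.1, a.2 + 1⟩

/-! In the structure group, conjugating `g_x` by a generator of any other orbit gives `g_{x+1}`.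
Comparing two orbits shows that the discrepancies `g_x⁻¹ g_{x+1}` of one are inverse to those of the
other; with a third orbit at hand, all discrepancies coincide in a single central element of order
dividing `2` and all `n_i`, which generates the commutator subgroup. When all `n_i` are even it is
nontrivial: send `g_x` to `± e_i`, with alternating signs along orbit `i`, where the `e_i` are
anticommuting units of a Clifford algebra.

For a rack 2-cocycle `φ` on `U_{n_1,…,n_r}` and `a`, `b` in the same orbit `i`, the increment
`γ_i = φ(a + 1, b) - φ(a, b)` does not depend on `a` and `b`. Up to multiples of `γ_i`, the values
`φ(a, b)` with `a` in orbit `i` depend on `b` only through its orbit. The increment is again killed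
by `gcd(n_1,…,n_r,2)`, and it vanishes as soon as there are three further orbits to compare. Applied
to the universal cocycle, this shows that `r²` integral coordinates and one torsion coordinate per
orbit determine a homology class, and explicit cycles realize all values of these coordinates. -/

section GroupTheory

open scoped commutatorElement

universe u

theorem commutator_le_of_closure_eq_top {G : Type*} [Group G] {s : Set G}
    (hs : Subgroup.closure s = ⊤) {N : Subgroup G} [N.Normal]
    (h : ∀ a ∈ s, ∀ b ∈ s, ⁅a, b⁆ ∈ N) : commutator G ≤ N := by
  have h_comm : ∀ a ∈ QuotientGroup.mk' N '' s, ∀ b ∈ QuotientGroup.mk' N '' s,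
      a * b = b * a := by
    rintro _ ⟨a, ha, rfl⟩ _ ⟨b, hb, rfl⟩
    rw [← commutatorElement_eq_one_iff_mul_comm, ← map_commutatorElement]
    exact (QuotientGroup.eq_one_iff _).2 (h a ha b hb)
  have h_top : Subgroup.closure (QuotientGroup.mk' N '' s) = ⊤ := by
    rw [← MonoidHom.map_closure, hs,
      Subgroup.map_top_of_surjective _ (QuotientGroup.mk'_surjective N)]
  rw [← Subgroup.Normal.quotient_commutative_iff_commutator_le]
  have := Subgroup.isMulCommutative_closure h_comm
  rw [h_top] at this
  exact ⟨⟨fun a b ↦ congrArg Subtype.val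
    (this.is_comm.comm ⟨a, Subgroup.mem_top a⟩ ⟨b, Subgroup.mem_top b⟩)⟩⟩

theorem exists_anticommuting_units (ι : Type u) [Finite ι] :
    ∃ (A : Type u) (_ : Ring A) (e : ι → Aˣ),
      (-1 : A) ≠ 1 ∧ Pairwise fun i j ↦ e i * e j = -(e j * e i) := by
  classical
  have := Fintype.ofFinite ι
  let Q : QuadraticForm ℚ (ι → ℚ) := QuadraticMap.weightedSumSquares ℚ (1 : ι → ℚ)
  have h_unit (i : ι) : IsUnit (CliffordAlgebra.ι Q (Pi.single i 1)) :=
    CliffordAlgebra.isUnit_ι_of_isUnit Q <| by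
      simp [Q, QuadraticMap.weightedSumSquares_apply, Pi.single_apply]
  have h_ortho {i j : ι} (hij : i ≠ j) :
      QuadraticMap.IsOrtho Q (Pi.single i 1) (Pi.single j 1) := by
    simp [QuadraticMap.IsOrtho, Q, QuadraticMap.weightedSumSquares_apply, Pi.single_apply,
      mul_add, Finset.sum_add_distrib, hij, hij.symm]
  have : CharZero (CliffordAlgebra Q) := algebraRat.charZero _
  refine ⟨CliffordAlgebra Q, inferInstance, fun i ↦ (h_unit i).unit, by norm_num,
    fun i j hij ↦ Units.ext ?_⟩
  exact CliffordAlgebra.ι_mul_ι_comm_of_isOrtho (h_ortho hij)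

end GroupTheory

namespace StructureGroup

variable {op : X → X → X} {G : Type*} [Group G]

theorem of_mul_of (a b : X) :
    (PresentedGroup.of a * PresentedGroup.of b : StructureGroup op) =
      PresentedGroup.of b * PresentedGroup.of (op a b) := by
  have h : PresentedGroup.mk (structureRels op) (FreeGroup.of a * FreeGroup.of b *
      (FreeGroup.of b * FreeGroup.of (op a b))⁻¹) = 1 :=
    PresentedGroup.one_of_mem ⟨a, b, rfl⟩
  rwa [map_mul, map_inv, mul_inv_eq_one] at h

theorem exists_hom (f : X → G) (hf : ∀ a b, f a * f b = f b * f (op a b)) :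
    ∃ φ : StructureGroup op →* G, ∀ a, φ (PresentedGroup.of a) = f a := by
  refine ⟨PresentedGroup.toGroup (f := f) ?_, fun a ↦ PresentedGroup.toGroup.of _⟩
  rintro _ ⟨a, b, rfl⟩
  rw [map_mul, map_inv, mul_inv_eq_one]
  simpa only [map_mul, FreeGroup.lift_apply_of] using hf a b

end StructureGroup

theorem Uop_fst {r : ℕ} (n : Fin r → ℕ) (a b : Σ i, ZMod (n i)) : (Uop n a b).1 = a.1 := by
  unfold Uop
  split_ifs <;> rfl

theorem Uop_of_eq {r : ℕ} (n : Fin r → ℕ) (i : Fin r) (x y : ZMod (n i)) :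
    Uop n ⟨i, x⟩ ⟨i, y⟩ = ⟨i, x⟩ :=
  if_pos rfl

theorem Uop_of_ne {r : ℕ} (n : Fin r → ℕ) {i j : Fin r} (h : i ≠ j) (x : ZMod (n i))
    (y : ZMod (n j)) : Uop n ⟨i, x⟩ ⟨j, y⟩ = ⟨i, x + 1⟩ :=
  if_neg h

section Commutator

variable {r : ℕ} (n : Fin r → ℕ)

/-- The generator `g_a` of the structure group for `a = x ∈ ℤ/n_i`. -/
def generator (i : Fin r) (x : ZMod (n i)) : StructureGroup (Uop n) :=
  PresentedGroup.of ⟨i, x⟩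

/-- The discrepancy `g_x⁻¹ g_{x+1}` between consecutive generators of one orbit. -/
def shift (i : Fin r) (x : ZMod (n i)) : StructureGroup (Uop n) :=
  (generator n i x)⁻¹ * generator n i (x + 1)

theorem generator_add_one (i : Fin r) (x : ZMod (n i)) :
    generator n i (x + 1) = generator n i x * shift n i x :=
  (mul_inv_cancel_left _ _).symm

theorem closure_range_generator :
    Subgroup.closure (Set.range fun a : Σ i, ZMod (n i) ↦ generator n a.1 a.2) = ⊤ :=
  PresentedGroup.closure_range_of _

theorem commute_generator (i : Fin r) (x y : ZMod (n i)) :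
    Commute (generator n i x) (generator n i y) := by
  have h := StructureGroup.of_mul_of (op := Uop n) ⟨i, x⟩ ⟨i, y⟩
  rwa [Uop_of_eq] at h

theorem generator_conj {i j : Fin r} (h : i ≠ j) (x : ZMod (n i)) (y : ZMod (n j)) :
    (generator n j y)⁻¹ * generator n i x * generator n j y = generator n i (x + 1) := by
  have hrel := StructureGroup.of_mul_of (op := Uop n) ⟨i, x⟩ ⟨j, y⟩
  rw [Uop_of_ne n h] at hrel
  rw [mul_assoc, inv_mul_eq_iff_eq_mul]
  exact hrel

theorem shift_eq_inv_shift {i j : Fin r} (h : i ≠ j) (x : ZMod (n i)) (y : ZMod (n j)) :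
    shift n i x = (shift n j y)⁻¹ := by
  rw [shift, shift, ← generator_conj n h x y, ← generator_conj n h.symm y x]
  group

open scoped commutatorElement in
theorem shift_eq_commutatorElement {i j : Fin r} (h : i ≠ j) (x : ZMod (n i))
    (y : ZMod (n j)) : shift n i x = ⁅(generator n i x)⁻¹, (generator n j y)⁻¹⁆ := by
  rw [shift, ← generator_conj n h x y, commutatorElement_def]
  group

theorem shift_ne_one (hn : ∀ i, 2 ∣ n i) (i : Fin r) (x : ZMod (n i)) : shift n i x ≠ 1 := by
  obtain ⟨A, _, e, h_neg, h_anti⟩ := exists_anticommuting_units (Fin r)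
  let parity (a : Σ i, ZMod (n i)) : ZMod 2 := ZMod.castHom (hn a.1) (ZMod 2) a.2
  let f (a : Σ i, ZMod (n i)) : Aˣ := if parity a = 0 then e a.1 else -e a.1
  have hf_succ (j : Fin r) (y : ZMod (n j)) : f ⟨j, y + 1⟩ = -f ⟨j, y⟩ := by
    have h_parity : ∀ t : ZMod 2, t + 1 = 0 ↔ t ≠ 0 := by decide
    by_cases h : parity ⟨j, y⟩ = 0 <;> simp_all [f, parity]
  have hf (a b : Σ i, ZMod (n i)) : f a * f b = f b * f (Uop n a b) := by
    obtain ⟨j, y⟩ := a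
    obtain ⟨k, z⟩ := b
    rcases eq_or_ne j k with rfl | hjk
    · rw [Uop_of_eq]
      simp only [f]
      split_ifs <;> simp
    · rw [Uop_of_ne n hjk, hf_succ]
      simp only [f]
      split_ifs <;> simp [h_anti hjk]
  obtain ⟨φ, hφ⟩ := StructureGroup.exists_hom f hf
  intro h
  have h_eq : -f ⟨i, x⟩ = f ⟨i, x⟩ := by
    rw [← hf_succ, ← hφ, ← hφ]
    exact congrArg φ (inv_mul_eq_one.1 h).symm
  have h_unit : (-1 : Aˣ) = 1 := by rwa [← neg_one_mul, mul_eq_right] at h_eq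
  exact h_neg (by simpa using congrArg Units.val h_unit)

variable (hr : 3 ≤ r)
include hr

theorem shift_eq_shift (i j : Fin r) (x : ZMod (n i)) (y : ZMod (n j)) :
    shift n i x = shift n j y := by
  obtain ⟨k, hki, hkj⟩ := Fin.exists_ne_and_ne_of_two_lt i j hr
  rw [shift_eq_inv_shift n hki.symm x 0, shift_eq_inv_shift n hkj.symm y 0]

theorem shift_sq (i : Fin r) (x : ZMod (n i)) : shift n i x ^ 2 = 1 := by
  obtain ⟨k, hki, -⟩ := Fin.exists_ne_and_ne_of_two_lt i i hr
  rw [pow_two, mul_eq_one_iff_eq_inv, ← shift_eq_inv_shift n hki 0 x]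
  exact shift_eq_shift n hr i k x 0

theorem generator_natCast (i : Fin r) (k : ℕ) :
    generator n i k = generator n i 0 * shift n i 0 ^ k := by
  induction k with
  | zero => simp
  | succ k ih =>
    rw [Nat.cast_succ, generator_add_one, ih, shift_eq_shift n hr i i k 0, pow_succ, mul_assoc]

theorem shift_pow (i j : Fin r) (x : ZMod (n i)) : shift n i x ^ n j = 1 := by
  simpa [shift_eq_shift n hr j i 0 x] using generator_natCast n hr j (n j)

theorem shift_mem_center (i : Fin r) (x : ZMod (n i)) :
    shift n i x ∈ Subgroup.center (StructureGroup (Uop n)) := by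
  rw [← Subgroup.centralizer_univ, ← Subgroup.coe_top, ← closure_range_generator,
    Subgroup.centralizer_closure, Subgroup.mem_centralizer_iff]
  rintro _ ⟨⟨j, y⟩, rfl⟩
  obtain ⟨k, hkj, -⟩ := Fin.exists_ne_and_ne_of_two_lt j j hr
  have h_conj : (generator n j y)⁻¹ * shift n k 0 * generator n j y = shift n k (0 + 1) := by
    rw [shift, shift, ← generator_conj n hkj (0 + 1) y, ← generator_conj n hkj 0 y]
    group
  rw [shift_eq_shift n hr k i _ x, shift_eq_shift n hr k i _ x, mul_assoc,
    inv_mul_eq_iff_eq_mul] at h_conj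
  exact h_conj.symm

theorem commutator_eq_zpowers_shift (i : Fin r) :
    commutator (StructureGroup (Uop n)) = Subgroup.zpowers (shift n i 0) := by
  apply le_antisymm
  · have h_center : Subgroup.zpowers (shift n i 0) ≤ Subgroup.center _ :=
      Subgroup.zpowers_le.2 (shift_mem_center n hr i 0)
    have : (Subgroup.zpowers (shift n i 0)).Normal :=
      ⟨fun a ha b ↦ by rwa [Subgroup.mem_center_iff.1 (h_center ha) b, mul_inv_cancel_right]⟩
    refine commutator_le_of_closure_eq_top
      ((Subgroup.closure_inv _).trans (closure_range_generator n)) ?_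
    rintro a ⟨⟨j, x⟩, ha⟩ b ⟨⟨k, y⟩, hb⟩
    rw [← inv_inv a, ← inv_inv b, ← ha, ← hb]
    rcases eq_or_ne j k with rfl | hjk
    · rw [commutatorElement_eq_one_iff_commute.2 (commute_generator n j x y).inv_inv]
      exact one_mem _
    · rw [← shift_eq_commutatorElement n hjk x y, shift_eq_shift n hr j i x 0]
      exact Subgroup.mem_zpowers _
  · obtain ⟨k, hki, -⟩ := Fin.exists_ne_and_ne_of_two_lt i i hr
    rw [Subgroup.zpowers_le, commutator_def, shift_eq_commutatorElement n hki.symm 0 0]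
    exact Subgroup.commutator_mem_commutator (Subgroup.mem_top _) (Subgroup.mem_top _)

theorem orderOf_shift (i : Fin r) :
    orderOf (shift n i 0) = Nat.gcd (Finset.univ.gcd n) 2 := by
  apply Nat.dvd_antisymm
  · exact Nat.dvd_gcd
      (Finset.dvd_gcd fun j _ ↦ orderOf_dvd_iff_pow_eq_one.2 (shift_pow n hr i j 0))
      (orderOf_dvd_iff_pow_eq_one.2 (shift_sq n hr i 0))
  · rcases (Nat.dvd_prime Nat.prime_two).1 (Nat.gcd_dvd_right (Finset.univ.gcd n) 2) with h | h
    · exact h ▸ one_dvd _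
    · have h_even (j : Fin r) : 2 ∣ n j :=
        (Nat.gcd_eq_right_iff_dvd.1 h).trans (Finset.gcd_dvd (Finset.mem_univ j))
      rw [h, orderOf_eq_prime (shift_sq n hr i 0) (shift_ne_one n h_even i 0)]

theorem nonempty_commutator_addEquiv :
    Nonempty (Additive ↥(commutator (StructureGroup (Uop n))) ≃+
      ZMod (Nat.gcd (Finset.univ.gcd n) 2)) := by
  let i : Fin r := ⟨0, by omega⟩
  rw [commutator_eq_zpowers_shift n hr i, ← orderOf_shift n hr i, ← Nat.card_zpowers]
  exact ⟨(zmodCyclicMulEquiv inferInstance).symm.toAdditiveLeft⟩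

end Commutator

section RackCohomology

variable {op : X → X → X} {A : Type*} [AddCommGroup A]

/-- The rack 2-cocycle condition with values in `A`: the additive extension of `φ` to chains
vanishes on the image of `d₃`. -/
def IsRackCocycle (op : X → X → X) (φ : X → X → A) : Prop :=
  ∀ a b c, φ (op a b) c - φ a c - φ (op a c) (op b c) + φ a b = 0

/-- The additive extension of a 2-cochain, given as a function of two variables, to all of
`C₂`. -/
def evalCochain (φ : X → X → A) : FreeAbelianGroup (X × X) →+ A :=
  FreeAbelianGroup.lift fun t ↦ φ t.1 t.2

@[simp]
theorem evalCochain_of (φ : X → X → A) (t : X × X) :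
    evalCochain φ (FreeAbelianGroup.of t) = φ t.1 t.2 :=
  FreeAbelianGroup.lift_apply_of _ _

theorem map_evalCochain {B : Type*} [AddCommGroup B] (f : A →+ B) (φ : X → X → A)
    (u : FreeAbelianGroup (X × X)) :
    f (evalCochain φ u) = evalCochain (fun a b ↦ f (φ a b)) u := by
  suffices h : f.comp (evalCochain φ) = evalCochain fun a b ↦ f (φ a b) from
    DFunLike.congr_fun h u
  ext t
  simp only [AddMonoidHom.comp_apply, evalCochain_of]

theorem d2_of (op : X → X → X) (a b : X) : d2 op (FreeAbelianGroup.of (a, b)) =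
    FreeAbelianGroup.of (op a b) - FreeAbelianGroup.of a :=
  FreeAbelianGroup.lift_apply_of _ _

theorem d3_of (op : X → X → X) (a b c : X) : d3 op (FreeAbelianGroup.of (a, b, c)) =
    FreeAbelianGroup.of (op a b, c) - FreeAbelianGroup.of (a, c)
      - FreeAbelianGroup.of (op a c, op b c) + FreeAbelianGroup.of (a, b) :=
  FreeAbelianGroup.lift_apply_of _ _

theorem evalCochain_comp_d3 {φ : X → X → A} (hφ : IsRackCocycle op φ) :
    (evalCochain φ).comp (d3 op) = 0 := by
  ext ⟨a, b, c⟩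
  simp only [AddMonoidHom.comp_apply, d3_of, map_add, map_sub, evalCochain_of]
  exact hφ a b c

/-- The universal rack 2-cocycle, with values in the cokernel of `d₃`. -/
def universalCocycle (op : X → X → X) (a b : X) :
    FreeAbelianGroup (X × X) ⧸ (d3 op).range :=
  QuotientAddGroup.mk (FreeAbelianGroup.of (a, b))

theorem evalCochain_universalCocycle (op : X → X → X) :
    evalCochain (universalCocycle op) = QuotientAddGroup.mk' (d3 op).range := by
  ext t
  exact evalCochain_of _ t

theorem isRackCocycle_universalCocycle (op : X → X → X) :
    IsRackCocycle op (universalCocycle op) := by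
  intro a b c
  have h : QuotientAddGroup.mk' (d3 op).range (d3 op (FreeAbelianGroup.of (a, b, c))) = 0 :=
    (QuotientAddGroup.eq_zero_iff _).2 ⟨_, rfl⟩
  rwa [d3_of] at h

theorem nonempty_H2_addEquiv {φ : X → X → A} (hφ : IsRackCocycle op φ)
    (h_inj : ∀ u ∈ (d2 op).ker, evalCochain φ u = 0 → u ∈ (d3 op).range)
    (h_surj : (d2 op).ker.map (evalCochain φ) = ⊤) : Nonempty (H2 op ≃+ A) := by
  let f : (d2 op).ker →+ A := (evalCochain φ).comp (d2 op).ker.subtype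
  have h_ker : (d3 op).range.addSubgroupOf (d2 op).ker = f.ker := by
    ext ⟨u, hu⟩
    rw [AddSubgroup.mem_addSubgroupOf, AddMonoidHom.mem_ker]
    refine ⟨?_, h_inj u hu⟩
    rintro ⟨v, hv⟩
    change evalCochain φ u = 0
    rw [← (show d3 op v = u from hv), ← AddMonoidHom.comp_apply, evalCochain_comp_d3 hφ,
      AddMonoidHom.zero_apply]
  have hf : Function.Surjective f := fun t ↦ by
    obtain ⟨u, hu, hut⟩ := h_surj.ge (AddSubgroup.mem_top t)
    exact ⟨⟨u, hu⟩, hut⟩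
  exact ⟨(QuotientAddGroup.quotientAddEquivOfEq h_ker).trans
    (QuotientAddGroup.quotientKerEquivOfSurjective f hf)⟩

end RackCohomology

section ZModFunctions

variable {N m : ℕ} {A : Type*} [AddCommGroup A]

theorem zmod_apply_eq_apply_zero {α : Type*} {f : ZMod N → α} (hf : Function.Periodic f 1)
    (x : ZMod N) : f x = f 0 := by
  obtain ⟨k, rfl⟩ := ZMod.intCast_surjective x
  simpa using hf.int_mul_eq k

theorem zmod_nsmul_eq_zero {f : ZMod N → A} {h : A} (hf : ∀ x, f (x + 1) = f x + h) :
    N • h = 0 := by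
  let F : AddConstMap (ZMod N) A 1 h := ⟨f, hf⟩
  simpa using AddConstMapClass.map_nat' F N

theorem zmod_apply_eq_add (hm : m ∣ N) {f : ZMod N → A} {Γ : ZMod m →+ A}
    (hf : ∀ x, f (x + 1) = f x + Γ 1) (x : ZMod N) :
    f x = f 0 + Γ (ZMod.castHom hm (ZMod m) x) := by
  have h_periodic : Function.Periodic (fun x ↦ f x - Γ (ZMod.castHom hm (ZMod m) x)) 1 :=
    fun x ↦ by simp only [hf, map_add, map_one, add_sub_add_right_eq_sub]
  have h := zmod_apply_eq_apply_zero h_periodic x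
  rw [map_zero, map_zero, sub_zero] at h
  exact sub_eq_iff_eq_add.1 h

theorem exists_zmod_hom_apply_one {a : A} (ha : m • a = 0) : ∃ Γ : ZMod m →+ A, Γ 1 = a := by
  let Γ : ZMod m →+ A := ZMod.lift m ⟨zmultiplesHom A a, by simpa using ha⟩
  have h := ZMod.lift_coe m ⟨zmultiplesHom A a, by simpa using ha⟩ 1
  exact ⟨Γ, by simpa [Γ] using h⟩

theorem addSubgroup_eq_top_of_single_mem {ι κ : Type*} [Finite ι] [Finite κ]
    [DecidableEq ι] [DecidableEq κ] {H : AddSubgroup ((ι → ℤ) × (κ → ZMod m))}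
    (h_free : ∀ i, (Pi.single i 1, 0) ∈ H) (h_torsion : ∀ k, (0, Pi.single k 1) ∈ H) :
    H = ⊤ := by
  have := Fintype.ofFinite ι
  have := Fintype.ofFinite κ
  rw [AddSubgroup.eq_top_iff']
  rintro ⟨v, w⟩
  choose w' hw' using fun k ↦ ZMod.intCast_surjective (w k)
  have h_sum : (v, w) = ∑ i, v i • ((Pi.single i 1, 0) : (ι → ℤ) × (κ → ZMod m)) +
      ∑ k, w' k • ((0, Pi.single k 1) : (ι → ℤ) × (κ → ZMod m)) := by
    ext k <;> simp [Prod.fst_sum, Prod.snd_sum, Pi.single_apply, hw']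
  rw [h_sum]
  exact add_mem (sum_mem fun i _ ↦ zsmul_mem (h_free i) _)
    (sum_mem fun k _ ↦ zsmul_mem (h_torsion k) _)

end ZModFunctions

section Cocycles

variable {r : ℕ} {n : Fin r → ℕ} {A : Type*} [AddCommGroup A]
  {φ : (Σ i, ZMod (n i)) → (Σ i, ZMod (n i)) → A}

/-- The increment of a 2-cochain `φ` in its first argument on the `i`-th orbit, based at
`(0, 0)`; for a cocycle it does not depend on the base point. -/
def increment (φ : (Σ i, ZMod (n i)) → (Σ i, ZMod (n i)) → A) (i : Fin r) : A :=
  φ ⟨i, 1⟩ ⟨i, 0⟩ - φ ⟨i, 0⟩ ⟨i, 0⟩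

variable (hφ : IsRackCocycle (Uop n) φ)
include hφ

namespace IsRackCocycle

theorem apply_add_one_add_one [Nontrivial (Fin r)] (i : Fin r) (x y : ZMod (n i)) :
    φ ⟨i, x + 1⟩ ⟨i, y + 1⟩ = φ ⟨i, x⟩ ⟨i, y⟩ := by
  obtain ⟨j, hj⟩ := exists_ne i
  have h := hφ ⟨i, x⟩ ⟨i, y⟩ ⟨j, 0⟩
  rw [Uop_of_ne n hj.symm, Uop_of_ne n hj.symm, Uop_of_eq] at h
  rw [eq_comm, ← sub_eq_zero, ← h]
  abel

theorem sub_left_eq_sub_right {i j : Fin r} (hij : i ≠ j) (x z : ZMod (n i)) (y : ZMod (n j)) :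
    φ ⟨i, x + 1⟩ ⟨i, z⟩ - φ ⟨i, x⟩ ⟨i, z⟩ = φ ⟨i, x⟩ ⟨j, y + 1⟩ - φ ⟨i, x⟩ ⟨j, y⟩ := by
  have h := hφ ⟨i, x⟩ ⟨j, y⟩ ⟨i, z⟩
  rw [Uop_of_ne n hij, Uop_of_ne n hij.symm, Uop_of_eq] at h
  rw [← sub_eq_zero, ← h]
  abel

theorem sub_left_eq_sub_diagonal {i j k : Fin r} (hij : i ≠ j) (hik : i ≠ k) (hjk : j ≠ k)
    (x : ZMod (n i)) (y : ZMod (n j)) (z : ZMod (n k)) :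
    φ ⟨i, x + 1⟩ ⟨k, z⟩ - φ ⟨i, x⟩ ⟨k, z⟩ =
      φ ⟨i, x + 1⟩ ⟨j, y + 1⟩ - φ ⟨i, x⟩ ⟨j, y⟩ := by
  have h := hφ ⟨i, x⟩ ⟨j, y⟩ ⟨k, z⟩
  rw [Uop_of_ne n hij, Uop_of_ne n hik, Uop_of_ne n hjk] at h
  rw [← sub_eq_zero, ← h]
  abel

theorem apply_add_one_left_of_same [Nontrivial (Fin r)] (i : Fin r) (x z : ZMod (n i)) :
    φ ⟨i, x + 1⟩ ⟨i, z⟩ = φ ⟨i, x⟩ ⟨i, z⟩ + increment φ i := by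
  obtain ⟨j, hj⟩ := exists_ne i
  have h_indep (x z z' : ZMod (n i)) : φ ⟨i, x + 1⟩ ⟨i, z⟩ - φ ⟨i, x⟩ ⟨i, z⟩ =
      φ ⟨i, x + 1⟩ ⟨i, z'⟩ - φ ⟨i, x⟩ ⟨i, z'⟩ := by
    rw [hφ.sub_left_eq_sub_right hj.symm x z 0, hφ.sub_left_eq_sub_right hj.symm x z' 0]
  have h_periodic :
      Function.Periodic (fun x : ZMod (n i) ↦ φ ⟨i, x + 1⟩ ⟨i, 0⟩ - φ ⟨i, x⟩ ⟨i, 0⟩) 1 :=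
    fun x ↦ by
      simp only [h_indep (x + 1) 0 (0 + 1), hφ.apply_add_one_add_one]
  have h := zmod_apply_eq_apply_zero h_periodic x
  rw [zero_add] at h
  rw [← sub_eq_iff_eq_add', h_indep x z 0, h, increment]

theorem apply_add_one_right_of_same [Nontrivial (Fin r)] (i : Fin r) (x z : ZMod (n i)) :
    φ ⟨i, x⟩ ⟨i, z + 1⟩ = φ ⟨i, x⟩ ⟨i, z⟩ - increment φ i := by
  rw [eq_sub_iff_add_eq, ← hφ.apply_add_one_left_of_same, hφ.apply_add_one_add_one]

theorem apply_add_one_right_of_ne {i j : Fin r} (hij : i ≠ j) (x : ZMod (n i))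
    (y : ZMod (n j)) : φ ⟨i, x⟩ ⟨j, y + 1⟩ = φ ⟨i, x⟩ ⟨j, y⟩ + increment φ i := by
  have : Nontrivial (Fin r) := ⟨i, j, hij⟩
  rw [← sub_eq_iff_eq_add', ← hφ.sub_left_eq_sub_right hij x 0 y, sub_eq_iff_eq_add',
    hφ.apply_add_one_left_of_same]

theorem sub_left_eq_sub_left_add {i j k : Fin r} (hij : i ≠ j) (hik : i ≠ k) (hjk : j ≠ k)
    (x : ZMod (n i)) (y : ZMod (n j)) (z : ZMod (n k)) :
    φ ⟨i, x + 1⟩ ⟨k, z⟩ - φ ⟨i, x⟩ ⟨k, z⟩ =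
      φ ⟨i, x + 1⟩ ⟨j, y⟩ - φ ⟨i, x⟩ ⟨j, y⟩ + increment φ i := by
  rw [hφ.sub_left_eq_sub_diagonal hij hik hjk x y z,
    hφ.apply_add_one_right_of_ne hij (x + 1) y]
  abel

theorem nsmul_increment [Nontrivial (Fin r)] (i j : Fin r) : n j • increment φ i = 0 := by
  rcases eq_or_ne i j with rfl | hij
  · exact zmod_nsmul_eq_zero (f := fun x ↦ φ ⟨i, x⟩ ⟨i, 0⟩)
      fun x ↦ hφ.apply_add_one_left_of_same i x 0
  · exact zmod_nsmul_eq_zero (f := fun y ↦ φ ⟨i, 0⟩ ⟨j, y⟩)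
      fun y ↦ hφ.apply_add_one_right_of_ne hij 0 y

theorem two_nsmul_increment (hr : 3 ≤ r) (i : Fin r) : 2 • increment φ i = 0 := by
  have : Nontrivial (Fin r) := Fin.nontrivial_iff_two_le.2 (by omega)
  obtain ⟨j, hj⟩ := exists_ne i
  obtain ⟨k, hki, hkj⟩ := Fin.exists_ne_and_ne_of_two_lt i j hr
  have hkj_eq := hφ.sub_left_eq_sub_left_add hj.symm hki.symm hkj.symm 0 0 0
  have hjk_eq := hφ.sub_left_eq_sub_left_add hki.symm hj.symm hkj 0 0 0
  rw [hkj_eq, add_assoc] at hjk_eq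
  rw [two_nsmul]
  exact left_eq_add.1 hjk_eq

theorem gcd_nsmul_increment (hr : 3 ≤ r) (i : Fin r) :
    Nat.gcd (Finset.univ.gcd n) 2 • increment φ i = 0 := by
  have : Nontrivial (Fin r) := Fin.nontrivial_iff_two_le.2 (by omega)
  rw [← addOrderOf_dvd_iff_nsmul_eq_zero]
  exact Nat.dvd_gcd
    (Finset.dvd_gcd fun j _ ↦ addOrderOf_dvd_iff_nsmul_eq_zero.2 (hφ.nsmul_increment i j))
    (addOrderOf_dvd_iff_nsmul_eq_zero.2 (hφ.two_nsmul_increment hr i))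

/-- Passing from one other orbit to a second one in `sub_left_eq_sub_left_add` costs one increment,
but a detour through a third one costs two. -/
theorem increment_eq_zero (hr : 4 ≤ r) (i : Fin r) : increment φ i = 0 := by
  obtain ⟨j, hji, -⟩ := Fin.exists_ne_and_ne_of_two_lt i i (by omega)
  obtain ⟨k, hki, hkj⟩ := Fin.exists_ne_and_ne_of_two_lt i j (by omega)
  obtain ⟨l, -, hl⟩ : ∃ l ∈ Finset.univ, l ∉ ({i, j, k} : Finset (Fin r)) :=
    Finset.exists_mem_notMem_of_card_lt_card <| by
      rw [Finset.card_fin]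
      exact Finset.card_le_three.trans_lt hr
  simp only [Finset.mem_insert, Finset.mem_singleton, not_or] at hl
  obtain ⟨hli, hlj, hlk⟩ := hl
  have hkj_eq := hφ.sub_left_eq_sub_left_add hji.symm hki.symm hkj.symm 0 0 0
  have hlk_eq := hφ.sub_left_eq_sub_left_add hki.symm (Ne.symm hli) (Ne.symm hlk) 0 0 0
  have hlj_eq := hφ.sub_left_eq_sub_left_add hji.symm (Ne.symm hli) (Ne.symm hlj) 0 0 0
  rw [hlk_eq, hkj_eq] at hlj_eq
  exact add_eq_left.1 hlj_eq

end IsRackCocycle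

end Cocycles

section Coordinates

variable {r : ℕ} {n : Fin r → ℕ} (p : Fin r → Fin r) {m : ℕ} (hm : ∀ i, m ∣ n i)

/-- The indicator cochain of the pairs with first entry in orbit `ij.1` and second entry in
orbit `ij.2`. -/
def orbitPair (ij : Fin r × Fin r) (a b : Σ i, ZMod (n i)) : ℤ :=
  if ij = (a.1, b.1) then 1 else 0

/-- The indicator cochain of the pairs with first entry `c` and second entry outside the orbit
of `c`. -/
def crossing (c a b : Σ i, ZMod (n i)) : ℤ :=
  if c = a ∧ a.1 ≠ b.1 then 1 else 0

/-- Reduction modulo a common divisor `m` of the orbit sizes. -/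
def residue (a : Σ i, ZMod (n i)) : ZMod m :=
  ZMod.castHom (hm a.1) (ZMod m) a.2

/-- The coefficient of the increment of the orbit of `a` in the value at `(a, b)` of a cocycle, once
written in the normal form `IsRackCocycle.apply_eq_baseValue_add`. For each orbit `i`, another orbit
`p i` is chosen as the reference from which the values on `i` are measured. -/
def torsionWeight (a b : Σ i, ZMod (n i)) : ZMod m :=
  if b.1 = a.1 then residue hm a - residue hm b
  else if b.1 = p a.1 then residue hm b
  else residue hm a + residue hm b

/-- The restriction of `torsionWeight` to first entries in orbit `i`. -/
def torsionCoordinate (i : Fin r) (a b : Σ i, ZMod (n i)) : ZMod m :=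
  if i = a.1 then torsionWeight p hm a b else 0

/-- The integral coordinates on `H₂`. On cycles, the crossings at all points of orbit `i` agree, so
the `orbitPair (i, j)` with `j ≠ i` sum to `n i` times a single crossing; the latter therefore takes
the place of `orbitPair (i, p i)`. -/
def freeCoordinate (ij : Fin r × Fin r) : (Σ i, ZMod (n i)) → (Σ i, ZMod (n i)) → ℤ :=
  if ij.2 = p ij.1 then crossing ⟨ij.1, 0⟩ else orbitPair ij

/-- The cocycle inducing the isomorphism of `H₂` with `ℤ^{r²} × (ℤ/m)^r`. -/
def coordinates (a b : Σ i, ZMod (n i)) : (Fin r × Fin r → ℤ) × (Fin r → ZMod m) :=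
  (fun ij ↦ freeCoordinate p ij a b, fun i ↦ torsionCoordinate p hm i a b)

theorem residue_add_one (i : Fin r) (x : ZMod (n i)) :
    residue hm ⟨i, x + 1⟩ = residue hm ⟨i, x⟩ + 1 := by
  simp only [residue, map_add, map_one]

theorem residue_zero (i : Fin r) : residue hm ⟨i, 0⟩ = 0 :=
  map_zero _

theorem isRackCocycle_orbitPair (ij : Fin r × Fin r) :
    IsRackCocycle (Uop n) (orbitPair ij) := by
  intro a b c
  simp only [orbitPair, Uop_fst]
  ring

theorem isRackCocycle_crossing (d : Σ i, ZMod (n i)) :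
    IsRackCocycle (Uop n) (crossing d) := by
  rintro ⟨i, x⟩ ⟨j, y⟩ ⟨k, z⟩
  simp only [crossing, Uop_fst]
  rcases eq_or_ne i j with rfl | hij
  · simp [Uop_of_eq]
  · rcases eq_or_ne i k with rfl | hik
    · simp [Uop_of_eq]
    · simp [Uop_of_ne, hij, hik]

theorem isRackCocycle_freeCoordinate (ij : Fin r × Fin r) :
    IsRackCocycle (Uop n) (freeCoordinate p ij) := by
  unfold freeCoordinate
  split_ifs
  · exact isRackCocycle_crossing _
  · exact isRackCocycle_orbitPair ij

theorem isRackCocycle_torsionWeight (hm2 : m ∣ 2) (h : r = 3 ∨ m = 1) (hp : ∀ i, p i ≠ i) :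
    IsRackCocycle (Uop n) (torsionWeight p hm) := by
  have h_two : (1 + 1 : ZMod m) = 0 := by
    rw [one_add_one_eq_two]
    exact_mod_cast (ZMod.natCast_eq_zero_iff 2 m).2 hm2
  rintro ⟨i, x⟩ ⟨j, y⟩ ⟨k, z⟩
  rcases eq_or_ne i j with rfl | hij
  · rcases eq_or_ne i k with rfl | hik
    · simp [Uop_of_eq]
    · simp only [Uop_of_eq, Uop_of_ne n hik, torsionWeight, residue_add_one, if_true]
      ring
  rcases eq_or_ne i k with rfl | hik
  · simp only [Uop_of_eq, Uop_of_ne n hij, Uop_of_ne n hij.symm, torsionWeight, residue_add_one,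
      if_true, hij.symm, if_false]
    split_ifs <;> ring
  rcases eq_or_ne j k with rfl | hjk
  · simp only [Uop_of_eq, Uop_of_ne n hij, torsionWeight, residue_add_one, hij.symm, if_false]
    split_ifs <;> ring
  simp only [Uop_of_ne n hij, Uop_of_ne n hik, Uop_of_ne n hjk, torsionWeight, residue_add_one,
    hij.symm, hik.symm, if_false]
  by_cases hk : k = p i
  · rw [if_pos hk, if_pos hk, if_neg (hk ▸ hjk), if_neg (hk ▸ hjk)]
    linear_combination -h_two
  by_cases hj : j = p i
  · rw [if_neg hk, if_neg hk, if_pos hj, if_pos hj]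
    ring
  rcases h with rfl | rfl
  · exact absurd (hp i) (by omega)
  · exact Subsingleton.elim _ _

theorem isRackCocycle_coordinates (hm2 : m ∣ 2) (h : r = 3 ∨ m = 1) (hp : ∀ i, p i ≠ i) :
    IsRackCocycle (Uop n) (coordinates p hm) := by
  intro a b c
  ext i
  · exact isRackCocycle_freeCoordinate p i a b c
  · simp only [coordinates, torsionCoordinate, Uop_fst, Prod.snd_add, Prod.snd_sub, Pi.add_apply,
      Pi.sub_apply, Prod.snd_zero, Pi.zero_apply]
    split_ifs
    · exact isRackCocycle_torsionWeight p hm hm2 h hp a b c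
    · simp

theorem evalCochain_coordinates (u : FreeAbelianGroup ((Σ i, ZMod (n i)) × Σ i, ZMod (n i))) :
    evalCochain (coordinates p hm) u =
      (fun ij ↦ evalCochain (freeCoordinate p ij) u,
        fun i ↦ evalCochain (torsionCoordinate p hm i) u) := by
  refine Prod.ext (funext fun ij ↦ ?_) (funext fun i ↦ ?_)
  · exact map_evalCochain ((Pi.evalAddMonoidHom (fun _ ↦ ℤ) ij).comp
      (AddMonoidHom.fst _ (Fin r → ZMod m))) (coordinates p hm) u
  · exact map_evalCochain ((Pi.evalAddMonoidHom (fun _ ↦ ZMod m) i).comp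
      (AddMonoidHom.snd (Fin r × Fin r → ℤ) _)) (coordinates p hm) u

theorem coeff_d2 (i : Fin r) (x : ZMod (n i))
    (u : FreeAbelianGroup ((Σ i, ZMod (n i)) × Σ i, ZMod (n i))) :
    FreeAbelianGroup.coeff ⟨i, x + 1⟩ (d2 (Uop n) u) =
      evalCochain (crossing ⟨i, x⟩) u - evalCochain (crossing ⟨i, x + 1⟩) u := by
  suffices h : (FreeAbelianGroup.coeff ⟨i, x + 1⟩).comp (d2 (Uop n)) =
      evalCochain (crossing ⟨i, x⟩) - evalCochain (crossing ⟨i, x + 1⟩) from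
    DFunLike.congr_fun h u
  ext ⟨⟨j, y⟩, ⟨k, z⟩⟩
  have h_coeff (a b : Σ i, ZMod (n i)) :
      FreeAbelianGroup.coeff a (FreeAbelianGroup.of b) = if a = b then 1 else 0 := by
    simp [FreeAbelianGroup.coeff, Finsupp.single_apply, eq_comm]
  have h_succ : (⟨i, x + 1⟩ : Σ i, ZMod (n i)) = ⟨j, y + 1⟩ ↔
      (⟨i, x⟩ : Σ i, ZMod (n i)) = ⟨j, y⟩ := by
    rcases eq_or_ne i j with rfl | hij <;> simp [*]
  rw [AddMonoidHom.comp_apply, AddMonoidHom.sub_apply, evalCochain_of, evalCochain_of, d2_of]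
  rcases eq_or_ne j k with rfl | hjk
  · simp [Uop_of_eq, crossing]
  · rw [Uop_of_ne n hjk, map_sub, h_coeff, h_coeff]
    simp only [crossing, h_succ, ne_eq, hjk, not_false_eq_true, and_true]

theorem evalCochain_crossing_eq
    {u : FreeAbelianGroup ((Σ i, ZMod (n i)) × Σ i, ZMod (n i))} (hu : u ∈ (d2 (Uop n)).ker)
    (i : Fin r) (x : ZMod (n i)) :
    evalCochain (crossing ⟨i, x⟩) u = evalCochain (crossing ⟨i, 0⟩) u := by
  refine zmod_apply_eq_apply_zero (f := fun x ↦ evalCochain (crossing ⟨i, x⟩) u) (fun y ↦ ?_) x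
  have h := coeff_d2 i y u
  rw [AddMonoidHom.mem_ker.1 hu, map_zero] at h
  exact (sub_eq_zero.1 h.symm).symm

end Coordinates

section NormalForm

variable {r : ℕ} {n : Fin r → ℕ} {p : Fin r → Fin r} {m : ℕ} {A : Type*} [AddCommGroup A]
  {φ : (Σ i, ZMod (n i)) → (Σ i, ZMod (n i)) → A}

/-- The value of a cochain at the base points of the orbits `i` and `j`, normalized for `j ≠ i` so
as to vanish at `j = p i`. -/
def baseValue (φ : (Σ i, ZMod (n i)) → (Σ i, ZMod (n i)) → A) (p : Fin r → Fin r)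
    (ij : Fin r × Fin r) : A :=
  φ ⟨ij.1, 0⟩ ⟨ij.2, 0⟩ - if ij.2 = ij.1 then 0 else φ ⟨ij.1, 0⟩ ⟨p ij.1, 0⟩

theorem baseValue_eq_zero (hp : ∀ i, p i ≠ i) {ij : Fin r × Fin r} (h : ij.2 = p ij.1) :
    baseValue φ p ij = 0 := by
  rw [baseValue, h, if_neg (hp _), sub_self]

namespace IsRackCocycle

variable (hφ : IsRackCocycle (Uop n) φ) (hm : ∀ i, m ∣ n i) (hp : ∀ i, p i ≠ i)
  {Γ : Fin r → ZMod m →+ A} (hΓ : ∀ i, Γ i 1 = increment φ i)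
include hφ hp hΓ

theorem apply_eq_baseValue_add (a b : Σ i, ZMod (n i)) :
    φ a b = baseValue φ p (a.1, b.1) + (if a.1 ≠ b.1 then φ a ⟨p a.1, 0⟩ else 0) +
      Γ a.1 (torsionWeight p hm a b) := by
  obtain ⟨i, x⟩ := a
  obtain ⟨j, y⟩ := b
  have : Nontrivial (Fin r) := ⟨p i, i, hp i⟩
  rcases eq_or_ne i j with rfl | hij
  · have hy := zmod_apply_eq_add (f := fun y ↦ φ ⟨i, x⟩ ⟨i, y⟩) (Γ := -Γ i) (hm i)
      (fun y ↦ by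
        rw [hφ.apply_add_one_right_of_same, AddMonoidHom.neg_apply, hΓ, sub_eq_add_neg]) y
    have hx := zmod_apply_eq_add (f := fun x ↦ φ ⟨i, x⟩ ⟨i, 0⟩) (Γ := Γ i) (hm i)
      (fun x ↦ by rw [hφ.apply_add_one_left_of_same, hΓ]) x
    rw [hy, hx]
    simp only [baseValue, torsionWeight, residue, if_true, ne_eq, not_true_eq_false, if_false,
      AddMonoidHom.neg_apply, map_sub]
    abel
  have hy := zmod_apply_eq_add (f := fun y ↦ φ ⟨i, x⟩ ⟨j, y⟩) (Γ := Γ i) (hm j)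
    (fun y ↦ by rw [hφ.apply_add_one_right_of_ne hij, hΓ]) y
  rw [hy]
  by_cases hj : j = p i
  · subst hj
    simp [baseValue_eq_zero hp, torsionWeight, residue, hij.symm, hij]
  · have hx := zmod_apply_eq_add (f := fun x ↦ φ ⟨i, x⟩ ⟨j, 0⟩ - φ ⟨i, x⟩ ⟨p i, 0⟩)
      (Γ := Γ i) (hm i) (fun x ↦ by
        have h := hφ.sub_left_eq_sub_left_add (hp i).symm hij (Ne.symm hj) x 0 0
        rw [sub_eq_iff_eq_add] at h
        rw [h, hΓ]
        abel) x
    rw [sub_eq_iff_eq_add] at hx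
    simp only [hx, baseValue, torsionWeight, residue, hij.symm, hij, hj, ne_eq,
      not_false_eq_true, if_true, if_false, map_add]
    abel

variable [∀ i, NeZero (n i)]

theorem apply_eq_sum (a b : Σ i, ZMod (n i)) :
    φ a b = ∑ ij, orbitPair ij a b • baseValue φ p ij +
      ∑ c, crossing c a b • φ c ⟨p c.1, 0⟩ +
      ∑ i, Γ i (torsionCoordinate p hm i a b) := by
  rw [hφ.apply_eq_baseValue_add hm hp hΓ a b]
  simp [orbitPair, crossing, torsionCoordinate, ite_and, apply_ite, ite_smul]

theorem evalCochain_eq_sum (u : FreeAbelianGroup ((Σ i, ZMod (n i)) × Σ i, ZMod (n i))) :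
    evalCochain φ u = ∑ ij, evalCochain (orbitPair ij) u • baseValue φ p ij +
      ∑ c, evalCochain (crossing c) u • φ c ⟨p c.1, 0⟩ +
      ∑ i, Γ i (evalCochain (torsionCoordinate p hm i) u) := by
  induction u using FreeAbelianGroup.induction_on with
  | zero => simp
  | of t => simpa only [evalCochain_of] using hφ.apply_eq_sum hm hp hΓ t.1 t.2
  | neg t h =>
    rw [map_neg, h]
    simp only [map_neg, neg_smul, Finset.sum_neg_distrib, neg_add]
  | add u v hu hv =>
    rw [map_add, hu, hv]
    simp only [map_add, add_smul, Finset.sum_add_distrib]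
    abel

theorem evalCochain_eq_zero {u : FreeAbelianGroup ((Σ i, ZMod (n i)) × Σ i, ZMod (n i))}
    (hu : u ∈ (d2 (Uop n)).ker) (h : evalCochain (coordinates p hm) u = 0) :
    evalCochain φ u = 0 := by
  rw [evalCochain_coordinates, Prod.mk_eq_zero] at h
  have h_free (ij : Fin r × Fin r) : evalCochain (freeCoordinate p ij) u = 0 :=
    congrFun h.1 ij
  have h_torsion (i : Fin r) : evalCochain (torsionCoordinate p hm i) u = 0 :=
    congrFun h.2 i
  have h_crossing (c : Σ i, ZMod (n i)) : evalCochain (crossing c) u = 0 := by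
    rw [evalCochain_crossing_eq hu, ← h_free (c.1, p c.1), freeCoordinate, if_pos rfl]
  have h_orbitPair (ij : Fin r × Fin r) :
      evalCochain (orbitPair ij) u • baseValue φ p ij = 0 := by
    by_cases hij : ij.2 = p ij.1
    · rw [baseValue_eq_zero hp hij, smul_zero]
    · have h_ij := h_free ij
      rw [freeCoordinate, if_neg hij] at h_ij
      rw [h_ij, zero_smul]
  simp [hφ.evalCochain_eq_sum hm hp hΓ u, h_torsion, h_crossing, h_orbitPair]

end IsRackCocycle

end NormalForm

section Homology

variable {r : ℕ} {n : Fin r → ℕ} {p : Fin r → Fin r} {m : ℕ} (hm : ∀ i, m ∣ n i)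

theorem coordinates_base {i j : Fin r} (hj : j ≠ p i) :
    coordinates p hm ⟨i, 0⟩ ⟨j, 0⟩ =
      (Pi.single (i, j) 1 + if i = j then 0 else Pi.single (i, p i) 1, 0) := by
  ext k
  · obtain ⟨k, l⟩ := k
    rcases eq_or_ne k i with rfl | hk
    · by_cases hl : l = p k
      · subst hl
        rcases eq_or_ne k j with rfl | hij
        · simp [coordinates, freeCoordinate, crossing, hj.symm]
        · simp [coordinates, freeCoordinate, crossing, hj.symm, hij]
      · rcases eq_or_ne k j with rfl | hij <;>
          simp [coordinates, freeCoordinate, orbitPair, *, Pi.single_apply]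
    · by_cases hl : l = p k <;> rcases eq_or_ne i j with rfl | hij <;>
        simp [coordinates, freeCoordinate, crossing, orbitPair, *]
  · simp [coordinates, torsionCoordinate, torsionWeight, residue_zero]

section Cycles

variable (hp : ∀ i, p i ≠ i)
include hp

theorem coordinates_reference (i : Fin r) (x : ZMod (n i)) (y : ZMod (n (p i))) :
    coordinates p hm ⟨i, x⟩ ⟨p i, y⟩ =
      (if x = 0 then Pi.single (i, p i) 1 else 0, Pi.single i (residue hm ⟨p i, y⟩)) := by
  ext k
  · obtain ⟨k, l⟩ := k
    by_cases hl : l = p k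
    · subst hl
      rcases eq_or_ne k i with rfl | hk
      · by_cases hx : x = 0 <;>
          simp [coordinates, freeCoordinate, crossing, hx, (hp k).symm, eq_comm]
      · by_cases hx : x = 0 <;> simp [coordinates, freeCoordinate, crossing, hx, hk]
    · have h_ne : ¬(k = i ∧ l = p i) := by
        rintro ⟨rfl, h⟩
        exact hl h
      by_cases hx : x = 0 <;>
        simp [coordinates, freeCoordinate, orbitPair, hl, hx, h_ne]
  · rcases eq_or_ne k i with rfl | hk
    · simp [coordinates, torsionCoordinate, torsionWeight, hp]
    · simp [coordinates, torsionCoordinate, hk]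

theorem single_mem_map_ker_fst [∀ i, NeZero (n i)] (ij : Fin r × Fin r) :
    (Pi.single ij 1, 0) ∈ (d2 (Uop n)).ker.map (evalCochain (coordinates p hm)) := by
  obtain ⟨i, j⟩ := ij
  rcases eq_or_ne j (p i) with rfl | hj
  · refine ⟨∑ x : ZMod (n i), FreeAbelianGroup.of (⟨i, x⟩, ⟨p i, 0⟩), ?_, ?_⟩
    · simp only [SetLike.mem_coe, AddMonoidHom.mem_ker, map_sum, d2_of, Uop_of_ne n (hp i).symm,
        Finset.sum_sub_distrib]
      rw [sub_eq_zero]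
      exact Fintype.sum_equiv (Equiv.addRight 1) _ _ fun _ ↦ rfl
    · simp [coordinates_reference hm hp, residue_zero, Prod.ext_iff, Prod.fst_sum, Prod.snd_sum]
  rcases eq_or_ne i j with rfl | hij
  · refine ⟨FreeAbelianGroup.of (⟨i, 0⟩, ⟨i, 0⟩), ?_, ?_⟩
    · simp only [SetLike.mem_coe, AddMonoidHom.mem_ker, d2_of, Uop_of_eq, sub_self]
    · simp [coordinates_base hm hj]
  · refine ⟨FreeAbelianGroup.of (⟨i, 0⟩, ⟨j, 0⟩) - FreeAbelianGroup.of (⟨i, 0⟩, ⟨p i, 0⟩), ?_, ?_⟩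
    · simp only [SetLike.mem_coe, AddMonoidHom.mem_ker, map_sub, d2_of, Uop_of_ne n hij,
        Uop_of_ne n (hp i).symm, sub_self]
    · simp [coordinates_base hm hj, coordinates_reference hm hp, residue_zero, hij]

theorem single_mem_map_ker_snd (i : Fin r) :
    (0, Pi.single i 1) ∈ (d2 (Uop n)).ker.map (evalCochain (coordinates p hm)) := by
  refine ⟨FreeAbelianGroup.of (⟨i, 0⟩, ⟨p i, 0 + 1⟩) - FreeAbelianGroup.of (⟨i, 0⟩, ⟨p i, 0⟩),
    ?_, ?_⟩
  · simp only [SetLike.mem_coe, AddMonoidHom.mem_ker, map_sub, d2_of, Uop_of_ne n (hp i).symm,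
      sub_self]
  · simp only [map_sub, evalCochain_of, coordinates_reference hm hp, residue_add_one, residue_zero]
    simp

end Cycles

variable [∀ i, NeZero (n i)]

include hm in
theorem nonempty_H2_Uop_addEquiv (hr : 2 ≤ r) (hm2 : m ∣ 2) (h : r = 3 ∨ m = 1)
    (h_increment : ∀ i, m • increment (universalCocycle (Uop n)) i = 0) :
    Nonempty (H2 (Uop n) ≃+ (Fin r × Fin r → ℤ) × (Fin r → ZMod m)) := by
  have : Nontrivial (Fin r) := Fin.nontrivial_iff_two_le.2 hr
  choose p hp using fun i : Fin r ↦ exists_ne i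
  choose Γ hΓ using fun i ↦ exists_zmod_hom_apply_one (h_increment i)
  refine nonempty_H2_addEquiv (isRackCocycle_coordinates p hm hm2 h hp) (fun u hu hu0 ↦ ?_)
    (addSubgroup_eq_top_of_single_mem (single_mem_map_ker_fst hm hp)
      (single_mem_map_ker_snd hm hp))
  have h_zero := (isRackCocycle_universalCocycle (Uop n)).evalCochain_eq_zero hm hp hΓ hu hu0
  rwa [evalCochain_universalCocycle, QuotientAddGroup.mk'_apply,
    QuotientAddGroup.eq_zero_iff] at h_zero

theorem nonempty_H2_Uop_addEquiv_of_four_le (hr : 4 ≤ r) :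
    Nonempty (H2 (Uop n) ≃+ (Fin r × Fin r → ℤ)) := by
  obtain ⟨e⟩ := nonempty_H2_Uop_addEquiv (n := n) (m := 1) (fun i ↦ one_dvd (n i)) (by omega)
    (one_dvd 2) (Or.inr rfl) fun i ↦ by
      rw [(isRackCocycle_universalCocycle (Uop n)).increment_eq_zero hr, smul_zero]
  exact ⟨e.trans AddEquiv.prodUnique⟩

end Homology

theorem nonempty_H2_Uop_addEquiv_of_three {n : Fin 3 → ℕ} [∀ i, NeZero (n i)] :
    Nonempty (H2 (Uop n) ≃+
      (Fin 3 × Fin 3 → ℤ) × (Fin 3 → ZMod (Nat.gcd (Finset.univ.gcd n) 2))) :=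
  nonempty_H2_Uop_addEquiv
    (fun i ↦ (Nat.gcd_dvd_left _ _).trans (Finset.gcd_dvd (Finset.mem_univ i)))
    (by decide) (Nat.gcd_dvd_right _ _) (Or.inl rfl)
    ((isRackCocycle_universalCocycle (Uop n)).gcd_nsmul_increment le_rfl)

/-- For `r ≥ 3` and `n_1,…,n_r ≥ 1`:
(i) the commutator subgroup of the structure group of `U_{n_1,…,n_r}` is
`ℤ/gcd(n_1,…,n_r,2)`;
(ii) if `r = 3` then `H₂ ≅ ℤ⁹ × (ℤ/gcd(n_1,n_2,n_3,2))³`;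
(iii) if `r ≥ 4` then `H₂ ≅ ℤ^{r²}` (no torsion). -/
theorem U_quandle_commutator_and_H2 (r : ℕ) (hr : 3 ≤ r) (n : Fin r → ℕ)
    (hn : ∀ i, 1 ≤ n i) :
    Nonempty (Additive ↥(commutator (StructureGroup (Uop n))) ≃+
        ZMod (Nat.gcd (Finset.univ.gcd n) 2)) ∧
      (r = 3 → Nonempty (H2 (Uop n) ≃+
        (Fin 9 → ℤ) × (Fin 3 → ZMod (Nat.gcd (Finset.univ.gcd n) 2)))) ∧
      (4 ≤ r → Nonempty (H2 (Uop n) ≃+ (Fin (r ^ 2) → ℤ))) := by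
  have (i : Fin r) : NeZero (n i) := ⟨Nat.one_le_iff_ne_zero.1 (hn i)⟩
  refine ⟨nonempty_commutator_addEquiv n hr, ?_, fun hr4 ↦ ?_⟩
  · rintro rfl
    obtain ⟨e⟩ := nonempty_H2_Uop_addEquiv_of_three (n := n)
    exact ⟨e.trans ((AddEquiv.arrowCongr finProdFinEquiv (AddEquiv.refl ℤ)).prodCongr
      (AddEquiv.refl _))⟩
  · obtain ⟨e⟩ := nonempty_H2_Uop_addEquiv_of_four_le (n := n) hr4
    exact ⟨e.trans (AddEquiv.arrowCongr
      (finProdFinEquiv.trans (finCongr (pow_two r).symm)) (AddEquiv.refl ℤ))⟩
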